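/- Parabolic trace theorem (initial trace): for s > 1/2 and r ≥ 0, the map φ(t,x) ↦ φ(0,x) from D(ℝ^{m+1}) to D(ℝ^m) extends by density to a bounded linear operator from H^{r,s}(ℝ_t × ℝ^m_x) to H^{r(1 − 1/(2s))}(ℝ^m). -/

import Mathlib

/-!
Write `F = φ̂`. By Fourier inversion the spatial Fourier transform of the trace `φ(0, ·)` at `ξ` is
`∫ F(τ, ξ) dτ` (`fourier_trace`). The Cauchy–Schwarz inequality with the weight
`w(τ) = (1 + τ²)^s + (1 + |ξ|²)^r` bounds its square by `(∫ dτ / w) · ∫ w |F(τ, ξ)|² dτ`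
(`enorm_integral_sq_le`). With `A = (1 + |ξ|²)^r` one has `w ≥ |τ|^{2s} + A`, and the scaling
`τ = A^{1/(2s)} x` gives `∫ dτ / w ≤ K A^{1/(2s) - 1}`, where `K = ∫ dx / (|x|^{2s} + 1)` is finite
because `2s > 1` (`lintegral_inv_weight_le`). Since `A^{1/(2s) - 1} = (1 + |ξ|²)^{-r(1 - 1/(2s))}`,
multiplying by the weight of the target norm and integrating in `ξ` bounds the squared norm of the
trace by `K` times that of `φ` (`HisoSq_trace_le`).
-/

open MeasureTheory Set Filter Topology
open scoped ENNReal NNReal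

noncomputable section

/-- The Fourier transform on `ℝ^k`:
`(𝓕 u)(ξ) = ∫ e^{-2πi x·ξ} u(x) dx`. -/
def FT (k : ℕ) (u : EuclideanSpace ℝ (Fin k) → ℂ) (ξ : EuclideanSpace ℝ (Fin k)) : ℂ :=
  ∫ x : EuclideanSpace ℝ (Fin k),
    Complex.exp (Complex.I * ((-2 * Real.pi * ∑ i, x i * ξ i : ℝ) : ℂ)) * u x

/-- Squared anisotropic Sobolev norm of
`H^{r,s}(ℝ_t × ℝ^k_x) = L²(ℝ;H^r(ℝ^k)) ∩ H^s(ℝ;L²(ℝ^k))`, defined via the Fourier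
transform `û(τ,ξ)`:
`‖u‖² = ∫ [(1+τ²)^s + (1+|ξ|²)^r] |û(τ,ξ)|² dτ dξ`.
Here coordinate `0` is the time variable `τ` and coordinates `1,…,k` are the spatial
frequencies `ξ`. -/
def HrsSq (k : ℕ) (r s : ℝ) (u : EuclideanSpace ℝ (Fin (k + 1)) → ℂ) : ℝ≥0∞ :=
  ∫⁻ ξ : EuclideanSpace ℝ (Fin (k + 1)),
    ENNReal.ofReal ((1 + (ξ 0) ^ 2) ^ s + (1 + ∑ i : Fin k, (ξ i.succ) ^ 2) ^ r)
      * (‖FT (k + 1) u ξ‖₊ : ℝ≥0∞) ^ 2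

/-- Squared (isotropic) fractional Sobolev norm of `H^σ(ℝ^k)` via the Fourier
transform: `‖u‖² = ∫ (1+|ξ|²)^σ |û(ξ)|² dξ`. -/
def HisoSq (k : ℕ) (σ : ℝ) (u : EuclideanSpace ℝ (Fin k) → ℂ) : ℝ≥0∞ :=
  ∫⁻ ξ : EuclideanSpace ℝ (Fin k),
    ENNReal.ofReal ((1 + ∑ i, (ξ i) ^ 2) ^ σ) * (‖FT k u ξ‖₊ : ℝ≥0∞) ^ 2

/-- The embedding `ℝ^m_x → ℝ_t × ℝ^m_x`, `x ↦ (0,x)` (the time coordinate, which is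
coordinate `0`, is set to `0`). -/
def timeZeroEmbed (m : ℕ) (y : EuclideanSpace ℝ (Fin m)) :
    EuclideanSpace ℝ (Fin (m + 1)) :=
  (EuclideanSpace.equiv (Fin (m + 1)) ℝ).symm
    (fun i => if h : i = 0 then 0 else y (i.pred h))

open scoped FourierTransform

/-! ### Splitting off the time variable -/

/-- The identification of `ℝ × ℝ^m` with `ℝ^{m+1}` that makes time coordinate `0`; a measurable
equivalence, so that integrals transport along it. -/
def timeSpace (m : ℕ) :
    ℝ × EuclideanSpace ℝ (Fin m) ≃ᵐ EuclideanSpace ℝ (Fin (m + 1)) :=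
  ((MeasurableEquiv.refl ℝ).prodCongr (MeasurableEquiv.toLp 2 (Fin m → ℝ)).symm).trans
    ((MeasurableEquiv.piFinSuccAbove (fun _ : Fin (m + 1) => ℝ) 0).symm.trans
      (MeasurableEquiv.toLp 2 (Fin (m + 1) → ℝ)))

@[simp] lemma timeSpace_zero (m : ℕ) (p : ℝ × EuclideanSpace ℝ (Fin m)) :
    timeSpace m p 0 = p.1 := rfl

@[simp] lemma timeSpace_succ (m : ℕ) (p : ℝ × EuclideanSpace ℝ (Fin m)) (i : Fin m) :
    timeSpace m p i.succ = p.2 i := rfl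

lemma timeSpace_measurePreserving (m : ℕ) : MeasurePreserving (timeSpace m) := by
  have h1 : MeasurePreserving (MeasurableEquiv.toLp 2 (Fin (m + 1) → ℝ)) :=
    PiLp.volume_preserving_toLp _
  have h2 := (volume_preserving_piFinSuccAbove (fun _ : Fin (m + 1) => ℝ) 0).symm
  have h3 : MeasurePreserving (MeasurableEquiv.toLp 2 (Fin m → ℝ)).symm :=
    PiLp.volume_preserving_ofLp _
  have h4 := (MeasurePreserving.id (volume : Measure ℝ)).prod h3
  exact h1.comp (h2.comp h4)

lemma timeZeroEmbed_eq (m : ℕ) (y : EuclideanSpace ℝ (Fin m)) :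
    timeZeroEmbed m y = timeSpace m (0, y) := by
  ext i
  refine Fin.cases ?_ (fun j => ?_) i
  · simp [timeZeroEmbed]
  · simp [timeZeroEmbed]

lemma timeSpace_continuous (m : ℕ) : Continuous (timeSpace m) := by
  refine (PiLp.continuous_toLp 2 _).comp (continuous_pi fun i => ?_)
  refine Fin.cases ?_ (fun j => ?_) i
  · exact continuous_fst
  · exact (PiLp.continuous_apply 2 _ j).comp continuous_snd

lemma norm_sq_timeSpace (m : ℕ) (p : ℝ × EuclideanSpace ℝ (Fin m)) :
    ‖timeSpace m p‖ ^ 2 = ‖p.1‖ ^ 2 + ‖p.2‖ ^ 2 := by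
  simp [EuclideanSpace.norm_sq_eq, Fin.sum_univ_succ]

lemma norm_fst_le_timeSpace (m : ℕ) (p : ℝ × EuclideanSpace ℝ (Fin m)) :
    ‖p.1‖ ≤ ‖timeSpace m p‖ :=
  le_of_sq_le_sq (by rw [norm_sq_timeSpace]; linarith [sq_nonneg ‖p.2‖]) (norm_nonneg _)

lemma norm_snd_le_timeSpace (m : ℕ) (p : ℝ × EuclideanSpace ℝ (Fin m)) :
    ‖p.2‖ ≤ ‖timeSpace m p‖ :=
  le_of_sq_le_sq (by rw [norm_sq_timeSpace]; linarith [sq_nonneg ‖p.1‖]) (norm_nonneg _)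

/-! ### The Fourier transform of the trace -/

lemma FT_eq_fourier (k : ℕ) (u : EuclideanSpace ℝ (Fin k) → ℂ) : FT k u = 𝓕 u := by
  ext ξ
  rw [Real.fourier_eq', FT]
  congr 1 with x
  rw [smul_eq_mul, mul_comm Complex.I]
  simp [PiLp.inner_apply, mul_comm]

lemma schwartz_decay {V : Type*} [NormedAddCommGroup V] [NormedSpace ℝ V]
    (f : SchwartzMap V ℂ) (k : ℕ) :
    ∃ C, 0 ≤ C ∧ ∀ x, ‖f x‖ ≤ C * (1 + ‖x‖) ^ (-(k : ℝ)) := by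
  refine ⟨2 ^ k * (Finset.Iic (k, 0)).sup (fun m => SchwartzMap.seminorm ℝ m.1 m.2) f,
    by positivity, fun x => ?_⟩
  have h := SchwartzMap.one_add_le_sup_seminorm_apply (𝕜 := ℝ) (m := (k, 0)) le_rfl le_rfl f x
  rw [norm_iteratedFDeriv_zero] at h
  have : 0 < 1 + ‖x‖ := by positivity
  rw [Real.rpow_neg this.le, Real.rpow_natCast, ← div_eq_mul_inv, le_div_iff₀ (by positivity)]
  linarith

/-- Along the slices `{x = const}` a Schwartz function has an integrable bound independent of the
slice. -/
lemma time_slice_bound (m : ℕ) (f : SchwartzMap (EuclideanSpace ℝ (Fin (m + 1))) ℂ) :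
    ∃ b : ℝ → ℝ, Integrable b ∧ ∀ t y, ‖f (timeSpace m (t, y))‖ ≤ b t := by
  obtain ⟨C, hC, h⟩ := schwartz_decay f 2
  refine ⟨fun t => C * (1 + ‖t‖) ^ (-((2 : ℕ) : ℝ)),
    (integrable_one_add_norm (by simp)).const_mul C, fun t y => (h _).trans ?_⟩
  have := norm_fst_le_timeSpace m (t, y)
  refine mul_le_mul_of_nonneg_left ?_ hC
  exact Real.rpow_le_rpow_of_nonpos (by positivity) (by simpa using this) (by simp)

lemma space_slice_integrable (m : ℕ) (f : SchwartzMap (EuclideanSpace ℝ (Fin (m + 1))) ℂ)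
    (t : ℝ) : Integrable (fun y => f (timeSpace m (t, y))) := by
  obtain ⟨C, hC, h⟩ := schwartz_decay f (m + 1)
  refine ((integrable_one_add_norm (E := EuclideanSpace ℝ (Fin m)) (μ := volume)
    (r := ((m + 1 : ℕ) : ℝ)) (by simp)).const_mul C).mono' ?_ (ae_of_all _ fun y => (h _).trans ?_)
  · exact (f.continuous.comp ((timeSpace_continuous m).comp (by fun_prop))).aestronglyMeasurable
  have := norm_snd_le_timeSpace m (t, y)
  gcongr C * ?_
  exact Real.rpow_le_rpow_of_nonpos (by positivity) (by simpa using this)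
    (by simp only [Left.neg_nonpos_iff]; positivity)

/-- The spatial Fourier transform of `φ(0, ·)` is the integral of `φ̂(τ, ·)` over the time
frequency `τ`. The integral `H(ξ) = ∫ φ̂(τ, ξ) dτ` is continuous and integrable, and Fourier
inversion for `φ` with Fubini shows `φ(0, ·) = 𝓕⁻ H`; apply `𝓕`. -/
lemma fourier_trace (m : ℕ) (φ : SchwartzMap (EuclideanSpace ℝ (Fin (m + 1))) ℂ)
    (ξ : EuclideanSpace ℝ (Fin m)) :
    FT m (fun y => φ (timeZeroEmbed m y)) ξ = ∫ τ : ℝ, FT (m + 1) φ (timeSpace m (τ, ξ)) := by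
  rw [FT_eq_fourier, FT_eq_fourier, ← SchwartzMap.fourier_coe]
  set F := 𝓕 φ with hF
  have hcont : Continuous fun p => F (timeSpace m p) :=
    F.continuous.comp (timeSpace_continuous m)
  have hFi : Integrable (fun p => F (timeSpace m p)) :=
    ((timeSpace_measurePreserving m).integrable_comp_emb
      (timeSpace m).measurableEmbedding).2 F.integrable
  set H : EuclideanSpace ℝ (Fin m) → ℂ := fun η => ∫ τ : ℝ, F (timeSpace m (τ, η)) with hH
  have hHi : Integrable H := hFi.integral_prod_right
  have hHc : Continuous H := by
    obtain ⟨b, hb, hle⟩ := time_slice_bound m F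
    refine continuous_of_dominated (bound := b)
      (fun η => (hcont.comp (by fun_prop)).aestronglyMeasurable)
      (fun η => ae_of_all _ fun t => hle t η) hb
      (ae_of_all _ fun t => hcont.comp (by fun_prop))
  have key : (fun y => φ (timeZeroEmbed m y)) = 𝓕⁻ H := by
    ext y
    have h1 : φ (timeZeroEmbed m y) = (𝓕⁻ (F : EuclideanSpace ℝ (Fin (m + 1)) → ℂ))
        (timeSpace m (0, y)) := by
      rw [← SchwartzMap.fourierInv_coe, hF, FourierTransform.fourierInv_fourier_eq,
        timeZeroEmbed_eq]
    rw [h1, Real.fourierInv_eq', Real.fourierInv_eq',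
      ← (timeSpace_measurePreserving m).integral_comp (timeSpace m).measurableEmbedding]
    have hinner : ∀ p : ℝ × EuclideanSpace ℝ (Fin m),
        inner ℝ (timeSpace m p) (timeSpace m (0, y)) = inner ℝ p.2 y := fun p => by
      simp [PiLp.inner_apply, Fin.sum_univ_succ]
    have hph : Continuous fun p : ℝ × EuclideanSpace ℝ (Fin m) =>
        Complex.exp (((2 * Real.pi * inner ℝ p.2 y : ℝ) : ℂ) * Complex.I) := by fun_prop
    simp_rw [hinner]
    rw [Measure.volume_eq_prod, integral_prod_symm]
    · simp only [hH, integral_smul]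
    · refine hFi.mono (hph.smul hcont).aestronglyMeasurable (ae_of_all _ fun p => ?_)
      rw [norm_smul, Complex.norm_exp_ofReal_mul_I, one_mul]
  have hti : Integrable (fun y => φ (timeZeroEmbed m y)) := by
    simp_rw [timeZeroEmbed_eq]
    exact space_slice_integrable m φ 0
  have hFH : Integrable (𝓕 H) := by
    rw [key] at hti
    refine hti.comp_neg.congr (ae_of_all _ fun η => ?_)
    simp [Real.fourierInv_eq_fourier_neg]
  rw [key, hHc.fourier_fourierInv_eq hHi hFH]

/-! ### The weight in the time frequency -/

lemma integrable_weight {p : ℝ} (hp : 1 < p) : Integrable fun x : ℝ => (|x| ^ p + 1)⁻¹ := by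
  have h := (integrable_one_add_norm (E := ℝ) (μ := volume) (r := p) (by simpa using hp)).const_mul
    (2 ^ (p - 1))
  refine h.mono' (Measurable.aestronglyMeasurable (by fun_prop)) (ae_of_all _ fun x => ?_)
  have h1 : (|x| + 1) ^ p ≤ 2 ^ (p - 1) * (|x| ^ p + 1 ^ p) := by
    exact_mod_cast NNReal.rpow_add_le_mul_rpow_add_rpow ⟨|x|, abs_nonneg x⟩ 1 hp.le
  rw [Real.one_rpow] at h1
  have h2 : 0 < |x| ^ p + 1 := by positivity
  rw [Real.norm_of_nonneg (by positivity), Real.norm_eq_abs, Real.rpow_neg (by positivity),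
    ← div_eq_mul_inv, inv_eq_one_div, div_le_div_iff₀ h2 (by positivity), one_mul, add_comm 1]
  exact h1

/-- Scaling `τ = A^{1/p} x` turns the weight `|τ|^p + A` into `A (|x|^p + 1)`. -/
lemma integral_weight {p A : ℝ} (hp : 1 < p) (hA : 0 < A) :
    Integrable (fun x : ℝ => (|x| ^ p + A)⁻¹) ∧
      ∫ x : ℝ, (|x| ^ p + A)⁻¹ = A ^ (1 / p - 1) * ∫ x : ℝ, (|x| ^ p + 1)⁻¹ := by
  have hp0 : p ≠ 0 := by linarith
  set a := A ^ (1 / p) with ha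
  have ha0 : 0 < a := by positivity
  have hap : a ^ p = A := by rw [ha, ← Real.rpow_mul hA.le]; simp [hp0]
  have heq : (fun x : ℝ => (|x| ^ p + A)⁻¹) = fun x => A⁻¹ * (|a⁻¹ * x| ^ p + 1)⁻¹ := by
    ext x
    rw [abs_mul, abs_of_pos (inv_pos.2 ha0), Real.mul_rpow (by positivity) (by positivity),
      Real.inv_rpow ha0.le, hap, ← mul_inv]
    congr 1
    field_simp
  rw [heq]
  refine ⟨((integrable_weight hp).comp_mul_left' (inv_ne_zero ha0.ne')).const_mul _, ?_⟩
  rw [integral_const_mul,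
    Measure.integral_comp_inv_mul_left (fun x : ℝ => (|x| ^ p + 1)⁻¹) a, smul_eq_mul,
    abs_of_pos ha0, Real.rpow_sub_one hA.ne', ← ha]
  ring

lemma lintegral_inv_weight_le {s A : ℝ} (hs : 1 / 2 < s) (hA : 0 < A) :
    ∫⁻ τ : ℝ, ENNReal.ofReal (((1 + τ ^ 2) ^ s + A)⁻¹) ≤
      ENNReal.ofReal (A ^ (1 / (2 * s) - 1) * ∫ x : ℝ, (|x| ^ (2 * s) + 1)⁻¹) := by
  obtain ⟨hi, he⟩ := integral_weight (p := 2 * s) (by linarith) hA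
  rw [← he, ofReal_integral_eq_lintegral_ofReal hi (ae_of_all _ fun x => by positivity)]
  refine lintegral_mono fun τ => ENNReal.ofReal_le_ofReal ?_
  have : |τ| ^ (2 * s) ≤ (1 + τ ^ 2) ^ s := by
    rw [Real.rpow_mul (abs_nonneg _), Real.rpow_two, sq_abs]
    exact Real.rpow_le_rpow (by positivity) (by linarith) (by linarith)
  exact inv_anti₀ (by positivity) (by linarith)

/-- Weighted Cauchy–Schwarz inequality. -/
lemma enorm_integral_sq_le {w : ℝ → ℝ} (hw : Measurable w) (hw0 : ∀ t, 0 < w t) {f : ℝ → ℂ}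
    (hf : Measurable f) :
    ‖∫ t, f t‖ₑ ^ 2 ≤
      (∫⁻ t, ENNReal.ofReal (w t)⁻¹) * ∫⁻ t, ENNReal.ofReal (w t) * ‖f t‖ₑ ^ 2 := by
  have h := ENNReal.lintegral_mul_le_Lp_mul_Lq volume Real.HolderConjugate.two_two
    (f := fun t => ENNReal.ofReal ((w t)⁻¹) ^ (1 / 2 : ℝ))
    (g := fun t => ENNReal.ofReal (w t) ^ (1 / 2 : ℝ) * ‖f t‖ₑ) (by fun_prop) (by fun_prop)
  have e1 : ∀ t, (ENNReal.ofReal ((w t)⁻¹) ^ (1 / 2 : ℝ)) ^ (2 : ℝ) = ENNReal.ofReal (w t)⁻¹ :=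
    fun t => by rw [← ENNReal.rpow_mul]; norm_num
  have e2 : ∀ t, (ENNReal.ofReal (w t) ^ (1 / 2 : ℝ) * ‖f t‖ₑ) ^ (2 : ℝ) =
      ENNReal.ofReal (w t) * ‖f t‖ₑ ^ 2 := fun t => by
    rw [ENNReal.mul_rpow_of_nonneg _ _ zero_le_two, ← ENNReal.rpow_mul]; norm_num
  have e3 : ∀ t, ENNReal.ofReal ((w t)⁻¹) ^ (1 / 2 : ℝ) *
      (ENNReal.ofReal (w t) ^ (1 / 2 : ℝ) * ‖f t‖ₑ) = ‖f t‖ₑ := fun t => by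
    rw [← mul_assoc, ← ENNReal.mul_rpow_of_nonneg _ _ (by norm_num),
      ← ENNReal.ofReal_mul (inv_pos.2 (hw0 t)).le, inv_mul_cancel₀ (hw0 t).ne']
    simp
  simp only [Pi.mul_apply, e1, e2, e3] at h
  rw [← ENNReal.mul_rpow_of_nonneg _ _ (by norm_num)] at h
  have h' := (enorm_integral_le_lintegral_enorm f).trans h
  have := ENNReal.rpow_le_rpow h' (zero_le_two (α := ℝ))
  rw [← ENNReal.rpow_mul] at this
  norm_num at this
  exact this

/-! ### The trace estimate -/

/-- The estimate of the squared norms, frequency by frequency in `ξ` and then integrated. -/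
lemma HisoSq_trace_le (m : ℕ) (r s : ℝ) (hs : 1 / 2 < s)
    (φ : SchwartzMap (EuclideanSpace ℝ (Fin (m + 1))) ℂ) :
    HisoSq m (r * (1 - 1 / (2 * s))) (fun y => φ (timeZeroEmbed m y)) ≤
      ENNReal.ofReal (∫ x : ℝ, (|x| ^ (2 * s) + 1)⁻¹) * HrsSq m r s φ := by
  set K := ∫ x : ℝ, (|x| ^ (2 * s) + 1)⁻¹
  have hFc : Continuous (FT (m + 1) φ) := by
    rw [FT_eq_fourier, ← SchwartzMap.fourier_coe]
    exact (𝓕 φ).continuous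
  have hFm : Measurable fun p => FT (m + 1) φ (timeSpace m p) :=
    hFc.measurable.comp (timeSpace m).measurable
  have hHrs : HrsSq m r s φ = ∫⁻ ξ : EuclideanSpace ℝ (Fin m), ∫⁻ τ : ℝ,
      ENNReal.ofReal ((1 + τ ^ 2) ^ s + (1 + ∑ i, (ξ i) ^ 2) ^ r) *
        ‖FT (m + 1) φ (timeSpace m (τ, ξ))‖ₑ ^ 2 := by
    rw [HrsSq, ← (timeSpace_measurePreserving m).lintegral_comp_emb
      (timeSpace m).measurableEmbedding, Measure.volume_eq_prod, lintegral_prod_symm]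
    · rfl
    · simp only [timeSpace_zero, timeSpace_succ]
      exact Measurable.aemeasurable (Measurable.mul (by fun_prop) (hFm.enorm.pow_const 2))
  rw [hHrs, HisoSq, ← lintegral_const_mul' _ _ ENNReal.ofReal_ne_top]
  refine lintegral_mono fun ξ => ?_
  have hB : 0 < 1 + ∑ i, (ξ i) ^ 2 := by positivity
  set B := 1 + ∑ i, (ξ i) ^ 2
  have hCS := enorm_integral_sq_le (w := fun τ => (1 + τ ^ 2) ^ s + B ^ r) (by fun_prop)
    (fun t => by positivity) (hFm.comp (measurable_id.prodMk (measurable_const (a := ξ))))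
  have hW := lintegral_inv_weight_le hs (A := B ^ r) (by positivity)
  have hexp : B ^ (r * (1 - 1 / (2 * s))) * ((B ^ r) ^ (1 / (2 * s) - 1) * K) = K := by
    rw [← Real.rpow_mul hB.le, ← mul_assoc, ← Real.rpow_add hB]
    ring_nf
    simp
  have h := hCS.trans (mul_le_mul_left hW _)
  have h2 := mul_le_mul_right h (ENNReal.ofReal (B ^ (r * (1 - 1 / (2 * s)))))
  rw [← mul_assoc, ← ENNReal.ofReal_mul (by positivity), hexp] at h2
  rw [fourier_trace]
  exact h2

/-- **Parabolic trace theorem, initial trace.**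
For `s > 1/2` and `r ≥ 0`, the map `φ(t,x) ↦ φ(0,x)` extends by density to a bounded
linear operator `H^{r,s}(ℝ_t × ℝ^m_x) → H^{r(1 − 1/(2s))}(ℝ^m)`.  Boundedness is
expressed on the dense subspace of Schwartz functions. -/
theorem parabolic_trace_theorem_initial
    (m : ℕ) (r s : ℝ) (hs : 1 / 2 < s) (hr : 0 ≤ r) :
    ∃ C : ℝ, 0 < C ∧
      ∀ φ : SchwartzMap (EuclideanSpace ℝ (Fin (m + 1))) ℂ,
        (HisoSq m (r * (1 - 1 / (2 * s)))
            (fun y => φ (timeZeroEmbed m y))) ^ (1/2 : ℝ)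
          ≤ ENNReal.ofReal C * (HrsSq m r s ⇑φ) ^ (1/2 : ℝ) := by
  set K := ∫ x : ℝ, (|x| ^ (2 * s) + 1)⁻¹
  have hK : 0 ≤ K := integral_nonneg fun x => by positivity
  -- Adding `1` spares the proof that `K` is positive.
  refine ⟨(K + 1) ^ (1 / 2 : ℝ), by positivity, fun φ => ?_⟩
  rw [← ENNReal.ofReal_rpow_of_nonneg (by positivity) (by norm_num),
    ← ENNReal.mul_rpow_of_nonneg _ _ (by norm_num)]
  refine ENNReal.rpow_le_rpow ((HisoSq_trace_le m r s hs φ).trans ?_) (by norm_num)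
  gcongr
  linarith

end
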